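/- For every n ∈ ℤ and every locally integrable f with ‖f‖_{bmo_n} < ∞, the following are equivalent: (a) f ∈ vmo_n(ℝ^d); (b) for every ε > 0 there exists φ ∈ C_c^∞(ℝ^d) with ‖f − φ‖_{bmo_n} < ε. -/

import Mathlib

open MeasureTheory Metric Real Filter Topology NNReal ENNReal

noncomputable section

abbrev E (d : ℕ) := EuclideanSpace ℝ (Fin d)

/-- The auxiliary function ρ associated with the potential `V`. -/
def rho (d : ℕ) (V : E d → ℝ) (x : E d) : ℝ :=
  sSup {r : ℝ | 0 < r ∧ r ^ ((2:ℝ) - (d:ℝ)) * (∫ y in ball x r, V y) ≤ 1}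

/-- The reverse Hölder class `RH_{d/2}`. -/
def IsRH (d : ℕ) (V : E d → ℝ) : Prop :=
  ∃ C : ℝ, 0 < C ∧ ∀ (x : E d) (r : ℝ), 0 < r →
    ((volume (ball x r)).toReal⁻¹ * ∫ y in ball x r, (V y) ^ ((d:ℝ)/2)) ^ ((2:ℝ)/(d:ℝ)) ≤
      C * ((volume (ball x r)).toReal⁻¹ * ∫ y in ball x r, V y)

/-- The set `𝓑_n = {x : 2^{-(n+1)/2} < ρ(x) ≤ 2^{-n/2}}`. -/
def Bset (d : ℕ) (V : E d → ℝ) (n : ℤ) : Set (E d) :=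
  {x | (2:ℝ) ^ (-((n:ℝ)+1)/2) < rho d V x ∧ rho d V x ≤ (2:ℝ) ^ (-(n:ℝ)/2)}

/-- Average of `f` over the ball `B(x,r)`. -/
def ballAvg (d : ℕ) (f : E d → ℝ) (x : E d) (r : ℝ) : ℝ :=
  (volume (ball x r)).toReal⁻¹ * ∫ y in ball x r, f y

/-- Mean oscillation of `f` over the ball `B(x,r)`. -/
def oscB (d : ℕ) (f : E d → ℝ) (x : E d) (r : ℝ) : ℝ :=
  ballAvg d (fun y => |f y - ballAvg d f x r|) x r

/-- The BMO seminorm, as an extended nonnegative real. -/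
def bmoNormE (d : ℕ) (f : E d → ℝ) : ℝ≥0∞ :=
  ⨆ (x : E d) (r : ℝ) (_ : 0 < r), ENNReal.ofReal (oscB d f x r)

/-- The `bmo_n` norm, as an extended nonnegative real. -/
def bmonNorm (d : ℕ) (n : ℤ) (f : E d → ℝ) : ℝ≥0∞ :=
  bmoNormE d f +
    ⨆ (x : E d) (r : ℝ) (_ : (2:ℝ) ^ (-(n:ℝ)/2) ≤ r),
      ENNReal.ofReal (ballAvg d (fun y => |f y|) x r)

/-- The `BMO_L` norm, as an extended nonnegative real. -/
def bmoLNorm (d : ℕ) (V : E d → ℝ) (f : E d → ℝ) : ℝ≥0∞ :=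
  bmoNormE d f +
    ⨆ (x : E d) (r : ℝ) (_ : rho d V x ≤ r),
      ENNReal.ofReal (ballAvg d (fun y => |f y|) x r)

/-- The Gauss function `P(x) = (4π)^{-d/2} e^{-|x|²/4}`. -/
def gaussP (d : ℕ) (x : E d) : ℝ := (4 * π) ^ (-(d:ℝ)/2) * Real.exp (-(‖x‖^2)/4)

/-- The local maximal function `𝓜_n f(x) = sup_{0<t<2^{-n/2}} |P_t * f(x)|`. -/
def MnMax (d : ℕ) (n : ℤ) (f : E d → ℝ) (x : E d) : ℝ≥0∞ :=
  ⨆ (t : ℝ) (_ : 0 < t ∧ t < (2:ℝ) ^ (-(n:ℝ)/2)),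
    ENNReal.ofReal |∫ z, t ^ (-(d:ℝ)) * gaussP d (t⁻¹ • (x - z)) * f z|

/-- The `h^1_n` norm `‖𝓜_n f‖_{L¹}`, as an extended nonnegative real. -/
def h1nNorm (d : ℕ) (n : ℤ) (f : E d → ℝ) : ℝ≥0∞ := ∫⁻ x, MnMax d n f x

/-- Membership in the local Hardy space `h^1_n`. -/
def Memh1n (d : ℕ) (n : ℤ) (f : E d → ℝ) : Prop :=
  Integrable f volume ∧ h1nNorm d n f < ⊤

/-- `(H^1_L, q)`-atoms related to the ball `B(x₀, r)`, with `L`-constant `CL`. -/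
def IsHLAtom (d : ℕ) (V : E d → ℝ) (CL : ℝ) (q : ℝ≥0∞) (a : E d → ℝ) (x₀ : E d) (r : ℝ) :
    Prop :=
  r ≤ CL * rho d V x₀ ∧ Function.support a ⊆ ball x₀ r ∧
    eLpNorm a q volume ≤ (volume (ball x₀ r)) ^ (1 / q.toReal - 1) ∧
    (r ≤ rho d V x₀ / CL → (∫ x, a x) = 0)

/-!
Mean oscillation is subadditive, so vanishing mean oscillation and decay on distant balls survive
limits in the local BMO norm; both hold for compactly supported continuous functions.

Conversely, mollify `f` at a scale `t` below which its mean oscillation is at most `η`. On each ball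
of radius `t` the mollification is within `O(η)` of the average of `f`, so `f` minus its
mollification has averages `O(η)` on balls of radius `t`, hence on all larger balls by Fubini; its
oscillation on smaller balls is at most that of `f` plus `O(η)`. Decay on distant balls makes the
mollification tend to zero at infinity, so a smooth cutoff changes it by at most `η` uniformly, and
the local BMO norm is at most three times the uniform norm.
-/

open Module Set
open scoped Convolution

/-! ### Averages and mean oscillation -/

section Average

variable {α F : Type*} [MeasurableSpace α] {ν : Measure α} [NormedAddCommGroup F]

lemma average_nonneg {f : α → ℝ} (hf : 0 ≤ᵐ[ν] f) : 0 ≤ ⨍ y, f y ∂ν :=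
  integral_nonneg_of_ae (Measure.ae_smul_measure hf _)

lemma average_mono_ae {f g : α → ℝ} (hf : Integrable f ν) (hg : Integrable g ν) (h : f ≤ᵐ[ν] g) :
    ⨍ y, f y ∂ν ≤ ⨍ y, g y ∂ν :=
  integral_mono_ae hf.to_average hg.to_average (Measure.ae_smul_measure h _)

lemma average_norm_add_le {f g : α → F} (hf : Integrable f ν) (hg : Integrable g ν) :
    ⨍ y, ‖f y + g y‖ ∂ν ≤ ⨍ y, ‖f y‖ ∂ν + ⨍ y, ‖g y‖ ∂ν :=
  (average_mono_ae (hf.add hg).norm (hf.norm.add hg.norm)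
    (ae_of_all _ fun y => norm_add_le (f y) (g y))).trans_eq
    (integral_add hf.norm.to_average hg.norm.to_average)

lemma average_norm_le_of_ae_norm_le {f : α → F} {C : ℝ} (hC : 0 ≤ C) (h : ∀ᵐ y ∂ν, ‖f y‖ ≤ C) :
    ⨍ y, ‖f y‖ ∂ν ≤ C := by
  have hbound : ‖⨍ y, ‖f y‖ ∂ν‖ ≤ C * ((ν univ)⁻¹ • ν).real univ :=
    norm_integral_le_of_norm_le_const
      (Measure.ae_smul_measure (h.mono fun y hy => (norm_norm (f y)).trans_le hy) _)
  exact (Real.le_norm_self _).trans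
    (hbound.trans (mul_le_of_le_one_right hC measureReal_le_one))

variable [NormedSpace ℝ F]

lemma norm_average_sub_le [CompleteSpace F] [IsFiniteMeasure ν] [NeZero ν] {f : α → F}
    (hf : Integrable f ν) (c : F) : ‖⨍ y, f y ∂ν - c‖ ≤ ⨍ y, ‖f y - c‖ ∂ν := by
  have hsub : ⨍ y, f y ∂ν - c = ⨍ y, (f y - c) ∂ν := by
    conv_lhs => rw [← average_const ν c]
    exact (integral_sub hf.to_average (integrable_const c).to_average).symm
  exact hsub ▸ norm_integral_le_integral_norm _

lemma setAverage_le_div_mul_setAverage {s t : Set α} {f : α → ℝ} (hst : s ⊆ t) (ht : ν t ≠ ∞)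
    (hf₀ : 0 ≤ᵐ[ν.restrict t] f) (hf : IntegrableOn f t ν) :
    ⨍ y in s, f y ∂ν ≤ ν.real t / ν.real s * ⨍ y in t, f y ∂ν :=
  calc ⨍ y in s, f y ∂ν = (ν.real s)⁻¹ * ∫ y in s, f y ∂ν := setAverage_eq ..
    _ ≤ (ν.real s)⁻¹ * ∫ y in t, f y ∂ν := by
      gcongr
    _ = ν.real t / ν.real s * ⨍ y in t, f y ∂ν := by
      rw [← measure_smul_setAverage f ht, smul_eq_mul]
      ring

/-- The mean oscillation of `f` with respect to `ν`: the average distance of `f` to its average.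
The oscillation on a ball `B` is obtained by taking `ν = μ.restrict B`. -/
def meanOscillation (ν : Measure α) (f : α → F) : ℝ :=
  ⨍ y, ‖f y - ⨍ z, f z ∂ν‖ ∂ν

lemma meanOscillation_nonneg {f : α → F} : 0 ≤ meanOscillation ν f :=
  average_nonneg (ae_of_all _ fun _ => norm_nonneg _)

variable [IsFiniteMeasure ν]

lemma meanOscillation_add_le {f g : α → F} (hf : Integrable f ν) (hg : Integrable g ν) :
    meanOscillation ν (f + g) ≤ meanOscillation ν f + meanOscillation ν g := by
  have hadd : ⨍ z, (f z + g z) ∂ν = ⨍ z, f z ∂ν + ⨍ z, g z ∂ν :=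
    integral_add hf.to_average hg.to_average
  simp only [meanOscillation, Pi.add_apply, hadd, add_sub_add_comm]
  exact average_norm_add_le (f := fun y => f y - _) (g := fun y => g y - _)
    (hf.sub (integrable_const _)) (hg.sub (integrable_const _))

lemma meanOscillation_le_two_mul_average_norm_sub [CompleteSpace F] {f : α → F}
    (hf : Integrable f ν) (c : F) : meanOscillation ν f ≤ 2 * ⨍ y, ‖f y - c‖ ∂ν := by
  rcases eq_zero_or_neZero ν with rfl | _
  · simp [meanOscillation]
  · set a := ⨍ y, f y ∂ν
    have hca : ‖c - a‖ ≤ ⨍ y, ‖f y - c‖ ∂ν := by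
      rw [norm_sub_rev]
      exact norm_average_sub_le hf c
    calc meanOscillation ν f = ⨍ y, ‖(f y - c) + (c - a)‖ ∂ν := by
          simp only [meanOscillation, sub_add_sub_cancel, a]
      _ ≤ ⨍ y, ‖f y - c‖ ∂ν + ⨍ _, ‖c - a‖ ∂ν :=
          average_norm_add_le (f := fun y => f y - c) (hf.sub (integrable_const c))
            (integrable_const _)
      _ ≤ 2 * ⨍ y, ‖f y - c‖ ∂ν := by
          rw [average_const]
          linarith

lemma meanOscillation_le_of_ae_norm_sub_le [CompleteSpace F] {f : α → F} (hf : Integrable f ν)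
    {c : F} {C : ℝ} (hC : 0 ≤ C) (h : ∀ᵐ y ∂ν, ‖f y - c‖ ≤ C) : meanOscillation ν f ≤ 2 * C :=
  (meanOscillation_le_two_mul_average_norm_sub hf c).trans
    (mul_le_mul_of_nonneg_left (average_norm_le_of_ae_norm_le hC h) zero_le_two)

end Average

/-! ### The local BMO norm -/

section LocalBMO

variable {X F : Type*} [PseudoMetricSpace X] [MeasurableSpace X] {μ : Measure X} {δ : ℝ}
  [NormedAddCommGroup F] {f g : X → F}

lemma integrableOn_ball_of_locallyIntegrable [ProperSpace X] (hf : LocallyIntegrable f μ) (x : X)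
    (r : ℝ) : IntegrableOn f (ball x r) μ :=
  (hf.integrableOn_isCompact (isCompact_closedBall x r)).mono_set ball_subset_closedBall

instance isFiniteMeasure_restrict_ball [ProperSpace X] [IsFiniteMeasureOnCompacts μ] (x : X)
    (r : ℝ) : IsFiniteMeasure (μ.restrict (ball x r)) :=
  isFiniteMeasure_restrict.2 measure_ball_lt_top.ne

lemma measureReal_ball_pos [ProperSpace X] [IsFiniteMeasureOnCompacts μ] [μ.IsOpenPosMeasure]
    (x : X) {r : ℝ} (hr : 0 < r) : 0 < μ.real (ball x r) :=
  ENNReal.toReal_pos (measure_ball_pos μ x hr).ne' measure_ball_lt_top.ne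

/-- The large-scale mean norm at scale `δ`: the supremum of the averages of `‖f‖` on balls of radius
at least `δ`. -/
def largeScaleMeanENorm (μ : Measure X) (δ : ℝ) (f : X → F) : ℝ≥0∞ :=
  ⨆ (x : X) (r : ℝ) (_ : δ ≤ r), ENNReal.ofReal (⨍ y in ball x r, ‖f y‖ ∂μ)

lemma ofReal_setAverage_norm_le_largeScaleMeanENorm (x : X) {r : ℝ} (hr : δ ≤ r) :
    ENNReal.ofReal (⨍ y in ball x r, ‖f y‖ ∂μ) ≤ largeScaleMeanENorm μ δ f :=
  le_iSup_of_le x <| le_iSup₂_of_le r hr le_rfl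

lemma largeScaleMeanENorm_add_le [ProperSpace X] (hf : LocallyIntegrable f μ)
    (hg : LocallyIntegrable g μ) :
    largeScaleMeanENorm μ δ (f + g) ≤ largeScaleMeanENorm μ δ f + largeScaleMeanENorm μ δ g := by
  refine iSup_le fun x => iSup₂_le fun r hr => ?_
  calc ENNReal.ofReal (⨍ y in ball x r, ‖(f + g) y‖ ∂μ)
      ≤ ENNReal.ofReal (⨍ y in ball x r, ‖f y‖ ∂μ + ⨍ y in ball x r, ‖g y‖ ∂μ) :=
        ENNReal.ofReal_le_ofReal (average_norm_add_le
          (integrableOn_ball_of_locallyIntegrable hf x r)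
          (integrableOn_ball_of_locallyIntegrable hg x r))
    _ ≤ _ := ENNReal.ofReal_add_le
    _ ≤ largeScaleMeanENorm μ δ f + largeScaleMeanENorm μ δ g :=
        add_le_add (ofReal_setAverage_norm_le_largeScaleMeanENorm x hr)
          (ofReal_setAverage_norm_le_largeScaleMeanENorm x hr)

variable [NormedSpace ℝ F]

/-- The BMO seminorm: the supremum of the mean oscillations on balls. -/
def bmoESeminorm (μ : Measure X) (f : X → F) : ℝ≥0∞ :=
  ⨆ (x : X) (r : ℝ) (_ : 0 < r), ENNReal.ofReal (meanOscillation (μ.restrict (ball x r)) f)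

/-- The local BMO norm at scale `δ`: the BMO seminorm plus the large-scale mean norm. -/
def localBMOENorm (μ : Measure X) (δ : ℝ) (f : X → F) : ℝ≥0∞ :=
  bmoESeminorm μ f + largeScaleMeanENorm μ δ f

lemma ofReal_meanOscillation_le_bmoESeminorm (x : X) {r : ℝ} (hr : 0 < r) :
    ENNReal.ofReal (meanOscillation (μ.restrict (ball x r)) f) ≤ bmoESeminorm μ f :=
  le_iSup_of_le x <| le_iSup₂_of_le r hr le_rfl

lemma bmoESeminorm_le_localBMOENorm : bmoESeminorm μ f ≤ localBMOENorm μ δ f :=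
  le_self_add

lemma largeScaleMeanENorm_le_localBMOENorm : largeScaleMeanENorm μ δ f ≤ localBMOENorm μ δ f :=
  le_add_self

lemma localBMOENorm_le_ofReal_add {A B : ℝ} (hA : 0 ≤ A) (hB : 0 ≤ B)
    (hosc : ∀ (x : X) (r : ℝ), 0 < r → meanOscillation (μ.restrict (ball x r)) f ≤ A)
    (havg : ∀ (x : X) (r : ℝ), δ ≤ r → ⨍ y in ball x r, ‖f y‖ ∂μ ≤ B) :
    localBMOENorm μ δ f ≤ ENNReal.ofReal (A + B) := by
  rw [ENNReal.ofReal_add hA hB]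
  exact add_le_add
    (iSup_le fun x => iSup₂_le fun r hr => ENNReal.ofReal_le_ofReal (hosc x r hr))
    (iSup_le fun x => iSup₂_le fun r hr => ENNReal.ofReal_le_ofReal (havg x r hr))

variable [ProperSpace X] [IsFiniteMeasureOnCompacts μ]

lemma bmoESeminorm_add_le (hf : LocallyIntegrable f μ) (hg : LocallyIntegrable g μ) :
    bmoESeminorm μ (f + g) ≤ bmoESeminorm μ f + bmoESeminorm μ g := by
  refine iSup_le fun x => iSup₂_le fun r hr => ?_
  calc ENNReal.ofReal (meanOscillation (μ.restrict (ball x r)) (f + g))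
      ≤ ENNReal.ofReal (meanOscillation (μ.restrict (ball x r)) f +
          meanOscillation (μ.restrict (ball x r)) g) :=
        ENNReal.ofReal_le_ofReal (meanOscillation_add_le
          (integrableOn_ball_of_locallyIntegrable hf x r)
          (integrableOn_ball_of_locallyIntegrable hg x r))
    _ ≤ _ := ENNReal.ofReal_add_le
    _ ≤ bmoESeminorm μ f + bmoESeminorm μ g :=
        add_le_add (ofReal_meanOscillation_le_bmoESeminorm x hr)
          (ofReal_meanOscillation_le_bmoESeminorm x hr)

lemma localBMOENorm_add_le (hf : LocallyIntegrable f μ) (hg : LocallyIntegrable g μ) :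
    localBMOENorm μ δ (f + g) ≤ localBMOENorm μ δ f + localBMOENorm μ δ g :=
  (add_le_add (bmoESeminorm_add_le hf hg) (largeScaleMeanENorm_add_le hf hg)).trans_eq
    (add_add_add_comm ..)

lemma localBMOENorm_le_of_norm_le [CompleteSpace F] (hf : LocallyIntegrable f μ) {C : ℝ}
    (hC : 0 ≤ C) (h : ∀ y, ‖f y‖ ≤ C) : localBMOENorm μ δ f ≤ ENNReal.ofReal (2 * C + C) :=
  localBMOENorm_le_ofReal_add (by positivity) hC
    (fun x r _ => meanOscillation_le_of_ae_norm_sub_le (c := 0)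
      (integrableOn_ball_of_locallyIntegrable hf x r) hC (ae_of_all _ fun y => by simpa using h y))
    (fun _ _ _ => average_norm_le_of_ae_norm_le hC (ae_of_all _ h))

/-! ### The vanishing conditions -/

/-- Vanishing mean oscillation: the mean oscillation on a ball tends to zero with its radius,
uniformly in the centre. -/
def HasVanishingMeanOscillation (μ : Measure X) (f : X → F) : Prop :=
  ∀ ε > 0, ∃ σ > 0, ∀ (x : X) (r : ℝ), 0 < r → r < σ →
    meanOscillation (μ.restrict (ball x r)) f < ε

lemma hasVanishingMeanOscillation_of_forall_exists_bmoESeminorm_sub_lt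
    (hf : LocallyIntegrable f μ)
    (h : ∀ ε > 0, ∃ g : X → F, LocallyIntegrable g μ ∧ HasVanishingMeanOscillation μ g ∧
      bmoESeminorm μ (f - g) < ENNReal.ofReal ε) :
    HasVanishingMeanOscillation μ f := by
  intro ε hε
  obtain ⟨g, hg, hgosc, hfg⟩ := h (ε / 2) (half_pos hε)
  obtain ⟨σ, hσ, hgσ⟩ := hgosc (ε / 2) (half_pos hε)
  refine ⟨σ, hσ, fun x r hr hrσ => ?_⟩
  have hsub : meanOscillation (μ.restrict (ball x r)) (f - g) < ε / 2 :=
    (ENNReal.ofReal_lt_ofReal_iff (half_pos hε)).1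
      ((ofReal_meanOscillation_le_bmoESeminorm x hr).trans_lt hfg)
  have hadd := meanOscillation_add_le (integrableOn_ball_of_locallyIntegrable (hf.sub hg) x r)
    (integrableOn_ball_of_locallyIntegrable hg x r)
  rw [sub_add_cancel] at hadd
  linarith [hgσ x r hr hrσ]

lemma hasVanishingMeanOscillation_of_uniformContinuous [OpensMeasurableSpace X] [CompleteSpace F]
    (hf : UniformContinuous f) (hfi : LocallyIntegrable f μ) :
    HasVanishingMeanOscillation μ f := by
  intro ε hε
  obtain ⟨σ, hσ, hfσ⟩ := Metric.uniformContinuous_iff.1 hf (ε / 4) (by positivity)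
  refine ⟨σ, hσ, fun x r _ hrσ => ?_⟩
  have hnear : ∀ y ∈ ball x r, ‖f y - f x‖ ≤ ε / 4 := fun y hy => by
    rw [← dist_eq_norm]
    exact (hfσ ((mem_ball.1 hy).trans hrσ)).le
  have hosc := meanOscillation_le_of_ae_norm_sub_le
    (integrableOn_ball_of_locallyIntegrable hfi x r) (by positivity)
    (ae_restrict_of_forall_mem measurableSet_ball hnear)
  linarith

end LocalBMO

section DistantBalls

variable {V F : Type*} [NormedAddCommGroup V] [MeasurableSpace V] {μ : Measure V} {δ : ℝ}
  [NormedAddCommGroup F] {f : V → F}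

/-- Decay at infinity in the mean at scale `δ`: the averages of `‖f‖` on balls of radius at least
`δ` tend to zero as the balls move away from the origin. -/
def VanishesOnDistantBalls (μ : Measure V) (δ : ℝ) (f : V → F) : Prop :=
  ∀ ε > 0, ∃ R > 0, ∀ (x : V) (r : ℝ), δ ≤ r → Disjoint (ball x r) (ball 0 R) →
    ⨍ y in ball x r, ‖f y‖ ∂μ < ε

lemma vanishesOnDistantBalls_of_hasCompactSupport [OpensMeasurableSpace V]
    (hf : HasCompactSupport f) : VanishesOnDistantBalls μ δ f := by
  intro ε hε
  obtain ⟨R, hR, hsupp⟩ := hf.isCompact.isBounded.subset_ball_lt 0 0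
  refine ⟨R, hR, fun x r _ hdisj => (average_norm_le_of_ae_norm_le le_rfl ?_).trans_lt hε⟩
  refine ae_restrict_of_forall_mem measurableSet_ball fun y hy => ?_
  rw [image_eq_zero_of_notMem_tsupport fun hy' => hdisj.notMem_of_mem_left hy (hsupp hy'),
    norm_zero]

variable [ProperSpace V]

lemma vanishesOnDistantBalls_of_forall_exists_largeScaleMeanENorm_sub_lt
    (hf : LocallyIntegrable f μ)
    (h : ∀ ε > 0, ∃ g : V → F, LocallyIntegrable g μ ∧ VanishesOnDistantBalls μ δ g ∧
      largeScaleMeanENorm μ δ (f - g) < ENNReal.ofReal ε) :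
    VanishesOnDistantBalls μ δ f := by
  intro ε hε
  obtain ⟨g, hg, hgdist, hfg⟩ := h (ε / 2) (half_pos hε)
  obtain ⟨R, hR, hgR⟩ := hgdist (ε / 2) (half_pos hε)
  refine ⟨R, hR, fun x r hr hdisj => ?_⟩
  have hsub : ⨍ y in ball x r, ‖(f - g) y‖ ∂μ < ε / 2 :=
    (ENNReal.ofReal_lt_ofReal_iff (half_pos hε)).1
      ((ofReal_setAverage_norm_le_largeScaleMeanENorm x hr).trans_lt hfg)
  have hadd := average_norm_add_le (integrableOn_ball_of_locallyIntegrable (hf.sub hg) x r)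
    (integrableOn_ball_of_locallyIntegrable hg x r)
  simp only [Pi.sub_apply, sub_add_cancel] at hadd hsub
  linarith [hgR x r hr hdisj]

lemma tendsto_setAverage_norm_cocompact (hf : VanishesOnDistantBalls μ δ f) :
    Tendsto (fun y => ⨍ z in ball y δ, ‖f z‖ ∂μ) (cocompact V) (𝓝 0) := by
  refine Metric.tendsto_nhds.2 fun ε hε => ?_
  obtain ⟨R, -, hfR⟩ := hf ε hε
  filter_upwards [(tendsto_norm_cocompact_atTop (E := V)).eventually_ge_atTop (δ + R)] with y hy
  rw [Real.dist_0_eq_abs, abs_of_nonneg (average_nonneg (ae_of_all _ fun _ => norm_nonneg _))]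
  exact hfR y δ le_rfl (ball_disjoint_ball (by rwa [dist_zero_right]))

end DistantBalls

/-! ### Averages at different scales -/

section Haar

variable {V : Type*} [NormedAddCommGroup V] [MeasurableSpace V] [BorelSpace V] {μ : Measure V}
  [μ.IsAddHaarMeasure]

lemma addHaar_ball_mul_setLIntegral_ball_le [ProperSpace V] (x : V) (r t : ℝ) {f : V → ℝ≥0∞}
    (hf : AEMeasurable f μ) :
    μ (ball 0 t) * ∫⁻ y in ball x r, f y ∂μ ≤
      ∫⁻ z in ball x (r + t), ∫⁻ y in ball z t, f y ∂μ ∂μ := by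
  have hmeas : AEMeasurable (Function.uncurry fun y z => (ball y t).indicator (fun _ => f y) z)
      (μ.prod (μ.restrict (ball x (r + t)))) := by
    have huncurry : (Function.uncurry fun y z => (ball y t).indicator (fun _ => f y) z) =
        {p : V × V | dist p.2 p.1 < t}.indicator fun p => f p.1 := by
      ext ⟨y, z⟩
      simp [indicator]
    rw [huncurry]
    exact hf.comp_fst.indicator (measurableSet_lt (by fun_prop) (by fun_prop))
  have hball : ∀ y ∈ ball x r, ball y t ⊆ ball x (r + t) := fun y hy =>
    ball_subset_ball' (by linarith [mem_ball.1 hy])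
  calc μ (ball 0 t) * ∫⁻ y in ball x r, f y ∂μ
      = ∫⁻ y in ball x r, μ (ball 0 t) * f y ∂μ := (lintegral_const_mul'' _ hf.restrict).symm
    _ = ∫⁻ y in ball x r, ∫⁻ z in ball x (r + t), (ball y t).indicator (fun _ => f y) z ∂μ ∂μ := by
        refine setLIntegral_congr_fun measurableSet_ball fun y hy => ?_
        rw [setLIntegral_indicator measurableSet_ball, setLIntegral_const,
          inter_eq_left.2 (hball y hy), Measure.addHaar_ball_center μ y, mul_comm]
    _ ≤ ∫⁻ y, ∫⁻ z in ball x (r + t), (ball y t).indicator (fun _ => f y) z ∂μ ∂μ :=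
        setLIntegral_le_lintegral _ _
    _ = ∫⁻ z in ball x (r + t), ∫⁻ y, (ball y t).indicator (fun _ => f y) z ∂μ ∂μ :=
        lintegral_lintegral_swap hmeas
    _ = ∫⁻ z in ball x (r + t), ∫⁻ y in ball z t, f y ∂μ ∂μ := by
        refine lintegral_congr fun z => ?_
        rw [← lintegral_indicator measurableSet_ball]
        refine lintegral_congr fun y => ?_
        simp only [indicator, mem_ball, dist_comm y]

variable [NormedSpace ℝ V] [FiniteDimensional ℝ V]

lemma addHaar_real_ball_mul_of_pos (x : V) {c : ℝ} (hc : 0 < c) (r : ℝ) :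
    μ.real (ball x (c * r)) = c ^ finrank ℝ V * μ.real (ball x r) := by
  rw [measureReal_def, Measure.addHaar_ball_mul_of_pos μ x hc, ENNReal.toReal_mul,
    ENNReal.toReal_ofReal (by positivity), ← measureReal_def, Measure.addHaar_real_ball_center μ x]

lemma setAverage_ball_le_pow_mul_setAverage_ball {f : V → ℝ} (hf : LocallyIntegrable f μ)
    (hf₀ : 0 ≤ f) {c r : ℝ} (hc : 0 < c) (hr : 0 < r) {x y : V}
    (hsub : ball y r ⊆ ball x (c * r)) :
    ⨍ z in ball y r, f z ∂μ ≤ c ^ finrank ℝ V * ⨍ z in ball x (c * r), f z ∂μ := by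
  refine (setAverage_le_div_mul_setAverage hsub measure_ball_lt_top.ne (ae_of_all _ hf₀)
    (integrableOn_ball_of_locallyIntegrable hf _ _)).trans_eq ?_
  have hpos : 0 < μ.real (ball (0 : V) r) := measureReal_ball_pos 0 hr
  rw [addHaar_real_ball_mul_of_pos x hc, Measure.addHaar_real_ball_center μ x,
    Measure.addHaar_real_ball_center μ y, mul_div_cancel_right₀ _ hpos.ne']

lemma setAverage_ball_le_of_forall_setAverage_ball_le {f : V → ℝ} (hf : LocallyIntegrable f μ)
    (hf₀ : 0 ≤ f) {t r M : ℝ} (ht : 0 < t) (htr : t ≤ r)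
    (hM : ∀ z, ⨍ y in ball z t, f y ∂μ ≤ M) (x : V) :
    ⨍ y in ball x r, f y ∂μ ≤ 2 ^ finrank ℝ V * M := by
  have hr : 0 < r := ht.trans_le htr
  have hM₀ : 0 ≤ M := (average_nonneg (ae_of_all _ hf₀)).trans (hM 0)
  have hfi := integrableOn_ball_of_locallyIntegrable hf
  have htpos : 0 < μ.real (ball (0 : V) t) := measureReal_ball_pos 0 ht
  have hlintegral : ∀ z s, ∫⁻ y in ball z s, ENNReal.ofReal (f y) ∂μ =
      ENNReal.ofReal (∫ y in ball z s, f y ∂μ) := fun z s =>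
    (ofReal_integral_eq_lintegral_ofReal (hfi z s) (ae_of_all _ hf₀)).symm
  have hsmall : ∀ z, ∫ y in ball z t, f y ∂μ ≤ μ.real (ball 0 t) * M := fun z => by
    rw [← measure_smul_setAverage f measure_ball_lt_top.ne, smul_eq_mul,
      Measure.addHaar_real_ball_center μ z]
    exact mul_le_mul_of_nonneg_left (hM z) htpos.le
  have hfubini : μ.real (ball 0 t) * ∫ y in ball x r, f y ∂μ ≤
      μ.real (ball 0 t) * M * μ.real (ball x (r + t)) := by
    rw [← ENNReal.ofReal_le_ofReal_iff (by positivity), ENNReal.ofReal_mul htpos.le,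
      ENNReal.ofReal_mul (by positivity), ofReal_measureReal, ofReal_measureReal, ← hlintegral,
      ← setLIntegral_const]
    refine (addHaar_ball_mul_setLIntegral_ball_le x r t
      hf.aestronglyMeasurable.aemeasurable.ennreal_ofReal).trans (lintegral_mono fun z => ?_)
    rw [hlintegral]
    exact ENNReal.ofReal_le_ofReal (hsmall z)
  calc ⨍ y in ball x r, f y ∂μ = (μ.real (ball x r))⁻¹ * ∫ y in ball x r, f y ∂μ :=
        setAverage_eq ..
    _ ≤ (μ.real (ball x r))⁻¹ * (M * μ.real (ball x (2 * r))) := by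
        gcongr
        rw [mul_assoc] at hfubini
        refine (le_of_mul_le_mul_left hfubini htpos).trans ?_
        gcongr
        · exact measure_ball_lt_top.ne
        · linarith
    _ = 2 ^ finrank ℝ V * M := by
        have hrpos : 0 < μ.real (ball x r) := measureReal_ball_pos x hr
        rw [addHaar_real_ball_mul_of_pos x two_pos]
        field_simp

end Haar

/-! ### Mollification -/

section Mollification

variable {V F : Type*} [NormedAddCommGroup V] [NormedSpace ℝ V] [FiniteDimensional ℝ V]
  [MeasurableSpace V] [NormedAddCommGroup F] [NormedSpace ℝ F]

/-- The mollification of `f` by the smooth bump function `φ`, normalized to have integral one. -/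
def mollification (φ : ContDiffBump (0 : V)) (μ : Measure V) (f : V → F) : V → F :=
  φ.normed μ ⋆[ContinuousLinearMap.lsmul ℝ ℝ, μ] f

variable [BorelSpace V] {μ : Measure V} [μ.IsAddHaarMeasure] {f : V → F} {φ : ContDiffBump (0 : V)}

lemma mollification_apply (y : V) :
    mollification φ μ f y = ∫ z in ball y φ.rOut, φ.normed μ (y - z) • f z ∂μ := by
  have hzero : ∀ z ∉ ball y φ.rOut, φ.normed μ (y - z) • f z = 0 := fun z hz => by
    have hsupp : y - z ∉ Function.support (φ.normed μ) := by
      rwa [φ.support_normed_eq, mem_ball_zero_iff, ← dist_eq_norm, dist_comm, ← mem_ball]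
    rw [Function.notMem_support.1 hsupp, zero_smul]
  rw [setIntegral_eq_integral_of_forall_compl_eq_zero hzero, mollification, convolution_eq_swap]
  rfl

lemma normed_le_pow_div_measureReal_ball {K : ℝ} (hφ : φ.rOut ≤ K * φ.rIn) (y z : V) :
    φ.normed μ z ≤ K ^ finrank ℝ V / μ.real (ball y φ.rOut) := by
  have hK : 0 ≤ K := nonneg_of_mul_nonneg_left (φ.rOut_pos.le.trans hφ) φ.rIn_pos
  have hpos : 0 < μ.real (ball y φ.rOut) := measureReal_ball_pos y φ.rOut_pos
  have hvol : μ.real (ball y φ.rOut) ≤ μ.real (closedBall 0 φ.rOut) := by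
    rw [Measure.addHaar_real_ball_center]
    exact measureReal_mono ball_subset_closedBall measure_closedBall_lt_top.ne
  refine (φ.normed_le_div_measure_closedBall_rOut μ K hφ z).trans ?_
  gcongr

lemma norm_mollification_le (hf : LocallyIntegrable f μ) {K : ℝ} (hφ : φ.rOut ≤ K * φ.rIn) (y : V) :
    ‖mollification φ μ f y‖ ≤ K ^ finrank ℝ V * ⨍ z in ball y φ.rOut, ‖f z‖ ∂μ := by
  have hint : Integrable (fun z => φ.normed μ (y - z) • f z) μ :=
    hf.integrable_smul_left_of_hasCompactSupport (φ.continuous_normed.comp (by fun_prop))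
      (φ.hasCompactSupport_normed.comp_homeomorph (Homeomorph.subLeft y))
  calc ‖mollification φ μ f y‖
      = ‖∫ z in ball y φ.rOut, φ.normed μ (y - z) • f z ∂μ‖ := by rw [mollification_apply]
    _ ≤ ∫ z in ball y φ.rOut, ‖φ.normed μ (y - z) • f z‖ ∂μ := norm_integral_le_integral_norm _
    _ ≤ ∫ z in ball y φ.rOut, K ^ finrank ℝ V / μ.real (ball y φ.rOut) * ‖f z‖ ∂μ := by
        refine integral_mono hint.integrableOn.norm
          ((integrableOn_ball_of_locallyIntegrable hf y _).norm.const_mul _) fun z => ?_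
        simp only [norm_smul, Real.norm_of_nonneg (φ.nonneg_normed _)]
        gcongr
        exact normed_le_pow_div_measureReal_ball hφ y _
    _ = K ^ finrank ℝ V * ⨍ z in ball y φ.rOut, ‖f z‖ ∂μ := by
        rw [integral_const_mul, setAverage_eq, smul_eq_mul]
        ring

lemma contDiff_mollification {n : ℕ∞} (hf : LocallyIntegrable f μ) :
    ContDiff ℝ n (mollification φ μ f) :=
  φ.hasCompactSupport_normed.contDiff_convolution_left _ φ.contDiff_normed hf

lemma locallyIntegrable_mollification (hf : LocallyIntegrable f μ) :
    LocallyIntegrable (mollification φ μ f) μ :=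
  (contDiff_mollification (n := 0) hf).continuous.locallyIntegrable

lemma tendsto_mollification_cocompact {δ : ℝ} (hf : LocallyIntegrable f μ)
    (hdist : VanishesOnDistantBalls μ δ f) (hφ : φ.rOut ≤ δ) :
    Tendsto (mollification φ μ f) (cocompact V) (𝓝 0) := by
  set K := φ.rOut / φ.rIn
  set C := K ^ finrank ℝ V * (μ.real (ball (0 : V) δ) / μ.real (ball (0 : V) φ.rOut))
  have hbound : ∀ y, ‖mollification φ μ f y‖ ≤ C * ⨍ z in ball y δ, ‖f z‖ ∂μ := fun y => by
    have hK : φ.rOut ≤ K * φ.rIn := (div_mul_cancel₀ _ φ.rIn_pos.ne').ge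
    have hscale := setAverage_le_div_mul_setAverage (ball_subset_ball hφ) measure_ball_lt_top.ne
      (ae_of_all _ fun z => norm_nonneg (f z))
      (integrableOn_ball_of_locallyIntegrable hf y δ).norm
    rw [Measure.addHaar_real_ball_center μ y, Measure.addHaar_real_ball_center μ y] at hscale
    refine (norm_mollification_le hf hK y).trans ?_
    rw [mul_assoc]
    exact mul_le_mul_of_nonneg_left hscale
      (pow_nonneg (div_nonneg φ.rOut_pos.le φ.rIn_pos.le) _)
  refine squeeze_zero_norm hbound ?_
  simpa using (tendsto_setAverage_norm_cocompact hdist).const_mul C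

variable [CompleteSpace F]

lemma mollification_sub_const (hf : LocallyIntegrable f μ) (c : F) :
    mollification φ μ (fun z => f z - c) = fun y => mollification φ μ f y - c := by
  have hexists : ∀ {h : V → F}, LocallyIntegrable h μ →
      ConvolutionExists (φ.normed μ) h (ContinuousLinearMap.lsmul ℝ ℝ) μ := fun hh =>
    φ.hasCompactSupport_normed.convolutionExists_left _ φ.continuous_normed hh
  have hc : LocallyIntegrable (fun _ : V => c) μ := locallyIntegrable_const c
  ext y
  have hadd : mollification φ μ ((fun z => f z - c) + fun _ => c) y =
      mollification φ μ (fun z => f z - c) y + mollification φ μ (fun _ => c) y :=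
    congrFun ((hexists (hf.sub hc)).distrib_add (hexists hc)) y
  have hconst : mollification φ μ (fun _ => c) y = c :=
    φ.normed_convolution_eq_right fun _ _ => rfl
  have hcancel : (fun z => f z - c) + (fun _ => c) = f := sub_add_cancel f fun _ => c
  rw [hcancel, hconst] at hadd
  exact eq_sub_of_add_eq hadd.symm

lemma norm_mollification_sub_setAverage_le (hf : LocallyIntegrable f μ)
    (hφ : φ.rOut ≤ 2 * φ.rIn) {x y : V} (hy : y ∈ ball x φ.rOut) :
    ‖mollification φ μ f y - ⨍ z in ball x (2 * φ.rOut), f z ∂μ‖ ≤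
      4 ^ finrank ℝ V * meanOscillation (μ.restrict (ball x (2 * φ.rOut))) f := by
  set c := ⨍ z in ball x (2 * φ.rOut), f z ∂μ
  have hfc : LocallyIntegrable (fun z => ‖f z - c‖) μ := fun z =>
    ((hf.sub (locallyIntegrable_const c)) z).norm
  calc ‖mollification φ μ f y - c‖
      = ‖mollification φ μ (fun z => f z - c) y‖ := by rw [mollification_sub_const hf]
    _ ≤ 2 ^ finrank ℝ V * ⨍ z in ball y φ.rOut, ‖f z - c‖ ∂μ :=
        norm_mollification_le (hf.sub (locallyIntegrable_const c)) hφ y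
    _ ≤ 2 ^ finrank ℝ V * (2 ^ finrank ℝ V * ⨍ z in ball x (2 * φ.rOut), ‖f z - c‖ ∂μ) := by
        gcongr
        exact setAverage_ball_le_pow_mul_setAverage_ball hfc (fun _ => norm_nonneg _) two_pos
          φ.rOut_pos (ball_subset_ball' (by linarith [mem_ball.1 hy]))
    _ = 4 ^ finrank ℝ V * meanOscillation (μ.restrict (ball x (2 * φ.rOut))) f := by
        rw [← mul_assoc, ← mul_pow, show (2 : ℝ) * 2 = 4 by norm_num]
        rfl

lemma setAverage_norm_sub_mollification_le (hf : LocallyIntegrable f μ)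
    (hφ : φ.rOut ≤ 2 * φ.rIn) (x : V) :
    ⨍ y in ball x φ.rOut, ‖(f - mollification φ μ f) y‖ ∂μ ≤
      2 * 4 ^ finrank ℝ V * meanOscillation (μ.restrict (ball x (2 * φ.rOut))) f := by
  set t := φ.rOut
  set g := mollification φ μ f
  set c := ⨍ z in ball x (2 * t), f z ∂μ
  set ω := meanOscillation (μ.restrict (ball x (2 * t))) f
  have hω : 0 ≤ ω := meanOscillation_nonneg
  have hfc : LocallyIntegrable (fun z => f z - c) μ := hf.sub (locallyIntegrable_const c)
  have hcg : LocallyIntegrable (fun z => c - g z) μ :=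
    (locallyIntegrable_const c).sub (locallyIntegrable_mollification hf)
  have hfc_avg : ⨍ y in ball x t, ‖f y - c‖ ∂μ ≤ 2 ^ finrank ℝ V * ω :=
    setAverage_ball_le_pow_mul_setAverage_ball (fun z => (hfc z).norm) (fun _ => norm_nonneg _)
      two_pos φ.rOut_pos (ball_subset_ball (by linarith [φ.rOut_pos]))
  have hcg_avg : ⨍ y in ball x t, ‖c - g y‖ ∂μ ≤ 4 ^ finrank ℝ V * ω := by
    refine average_norm_le_of_ae_norm_le (by positivity)
      (ae_restrict_of_forall_mem measurableSet_ball fun y hy => ?_)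
    rw [norm_sub_rev]
    exact norm_mollification_sub_setAverage_le hf hφ hy
  calc ⨍ y in ball x t, ‖(f - g) y‖ ∂μ
      = ⨍ y in ball x t, ‖(f y - c) + (c - g y)‖ ∂μ := by
        simp only [Pi.sub_apply, sub_add_sub_cancel]
    _ ≤ 2 ^ finrank ℝ V * ω + 4 ^ finrank ℝ V * ω :=
        (average_norm_add_le (integrableOn_ball_of_locallyIntegrable hfc x t)
          (integrableOn_ball_of_locallyIntegrable hcg x t)).trans (add_le_add hfc_avg hcg_avg)
    _ ≤ 4 ^ finrank ℝ V * ω + 4 ^ finrank ℝ V * ω := by gcongr; norm_num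
    _ = 2 * 4 ^ finrank ℝ V * ω := by ring

lemma setAverage_norm_sub_mollification_le_of_rOut_le (hf : LocallyIntegrable f μ)
    (hφ : φ.rOut ≤ 2 * φ.rIn) {η : ℝ}
    (hosc : ∀ x, meanOscillation (μ.restrict (ball x (2 * φ.rOut))) f ≤ η) (x : V) {r : ℝ}
    (hr : φ.rOut ≤ r) :
    ⨍ y in ball x r, ‖(f - mollification φ μ f) y‖ ∂μ ≤ 2 * (8 ^ finrank ℝ V * η) := by
  have hdiff : LocallyIntegrable (f - mollification φ μ f) μ :=
    hf.sub (locallyIntegrable_mollification hf)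
  have hrOut : ∀ z, ⨍ y in ball z φ.rOut, ‖(f - mollification φ μ f) y‖ ∂μ ≤
      2 * 4 ^ finrank ℝ V * η := fun z =>
    (setAverage_norm_sub_mollification_le hf hφ z).trans
      (mul_le_mul_of_nonneg_left (hosc z) (by positivity))
  refine (setAverage_ball_le_of_forall_setAverage_ball_le (fun z => (hdiff z).norm)
    (fun _ => norm_nonneg _) φ.rOut_pos hr hrOut x).trans_eq ?_
  rw [show (8 : ℝ) = 2 * 4 by norm_num, mul_pow]
  ring

lemma meanOscillation_sub_mollification_le (hf : LocallyIntegrable f μ)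
    (hφ : φ.rOut ≤ 2 * φ.rIn) (x : V) {r : ℝ} (hr : r ≤ φ.rOut) :
    meanOscillation (μ.restrict (ball x r)) (f - mollification φ μ f) ≤
      meanOscillation (μ.restrict (ball x r)) f +
        2 * (4 ^ finrank ℝ V * meanOscillation (μ.restrict (ball x (2 * φ.rOut))) f) := by
  set g := mollification φ μ f
  have hg : LocallyIntegrable g μ := locallyIntegrable_mollification hf
  have hgosc : meanOscillation (μ.restrict (ball x r)) (-g) ≤
      2 * (4 ^ finrank ℝ V * meanOscillation (μ.restrict (ball x (2 * φ.rOut))) f) := by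
    refine meanOscillation_le_of_ae_norm_sub_le (c := -⨍ z in ball x (2 * φ.rOut), f z ∂μ)
      (integrableOn_ball_of_locallyIntegrable hg.neg x r)
      (mul_nonneg (by positivity) meanOscillation_nonneg)
      (ae_restrict_of_forall_mem measurableSet_ball fun y hy => ?_)
    rw [Pi.neg_apply, neg_sub_neg, norm_sub_rev]
    exact norm_mollification_sub_setAverage_le hf hφ (ball_subset_ball hr hy)
  rw [sub_eq_add_neg]
  exact (meanOscillation_add_le (integrableOn_ball_of_locallyIntegrable hf x r)
    (integrableOn_ball_of_locallyIntegrable hg.neg x r)).trans (add_le_add_right hgosc _)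

lemma localBMOENorm_sub_mollification_le {δ η : ℝ} (hf : LocallyIntegrable f μ)
    (hφ : φ.rOut ≤ 2 * φ.rIn) (hδ : φ.rOut ≤ δ)
    (hosc : ∀ (x : V) (r : ℝ), 0 < r → r ≤ 2 * φ.rOut →
      meanOscillation (μ.restrict (ball x r)) f ≤ η) :
    localBMOENorm μ δ (f - mollification φ μ f) ≤ ENNReal.ofReal (6 * (8 ^ finrank ℝ V * η)) := by
  have ht := φ.rOut_pos
  have hdiff : LocallyIntegrable (f - mollification φ μ f) μ :=
    hf.sub (locallyIntegrable_mollification hf)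
  have hosc₂ : ∀ x, meanOscillation (μ.restrict (ball x (2 * φ.rOut))) f ≤ η := fun x =>
    hosc x _ (by positivity) le_rfl
  have hη : 0 ≤ η := meanOscillation_nonneg.trans (hosc₂ 0)
  have hlarge : ∀ (x : V) (r : ℝ), φ.rOut ≤ r →
      ⨍ y in ball x r, ‖(f - mollification φ μ f) y‖ ∂μ ≤ 2 * (8 ^ finrank ℝ V * η) :=
    fun x r hr => setAverage_norm_sub_mollification_le_of_rOut_le hf hφ hosc₂ x hr
  have hsmall : ∀ (x : V) (r : ℝ), 0 < r → r ≤ φ.rOut →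
      meanOscillation (μ.restrict (ball x r)) (f - mollification φ μ f) ≤
        4 * (8 ^ finrank ℝ V * η) := fun x r hr hrt => calc
    _ ≤ η + 2 * (4 ^ finrank ℝ V * η) := by
      refine (meanOscillation_sub_mollification_le hf hφ x hrt).trans ?_
      gcongr
      exacts [hosc x r hr (by linarith), hosc₂ x]
    _ ≤ 8 ^ finrank ℝ V * η + 2 * (8 ^ finrank ℝ V * η) := by
      gcongr
      · exact le_mul_of_one_le_left hη (one_le_pow₀ (by norm_num))
      · norm_num
    _ ≤ 4 * (8 ^ finrank ℝ V * η) := by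
      rw [← one_add_mul]
      gcongr
      norm_num
  refine (localBMOENorm_le_ofReal_add (A := 4 * (8 ^ finrank ℝ V * η)) (by positivity)
    (by positivity) (fun x r hr => ?_) fun x r hr => hlarge x r (hδ.trans hr)).trans_eq ?_
  · rcases le_total r φ.rOut with hrt | htr
    · exact hsmall x r hr hrt
    · have hzero := meanOscillation_le_two_mul_average_norm_sub
        (integrableOn_ball_of_locallyIntegrable hdiff x r) 0
      simp only [sub_zero] at hzero
      linarith [hlarge x r htr]
  · ring_nf

end Mollification

/-! ### Approximation by compactly supported smooth functions -/

section Approximation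

variable {V F : Type*} [NormedAddCommGroup V] [NormedSpace ℝ V] [FiniteDimensional ℝ V]
  [NormedAddCommGroup F] [NormedSpace ℝ F]

lemma exists_contDiff_hasCompactSupport_norm_sub_le {n : ℕ∞} {g : V → F} (hg : ContDiff ℝ n g)
    (hlim : Tendsto g (cocompact V) (𝓝 0)) {ε : ℝ} (hε : 0 < ε) :
    ∃ φ : V → F, ContDiff ℝ n φ ∧ HasCompactSupport φ ∧ ∀ y, ‖g y - φ y‖ ≤ ε := by
  obtain ⟨R, hR, hgR⟩ : ∃ R > 0, ∀ y ∉ closedBall (0 : V) R, ‖g y‖ ≤ ε := by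
    obtain ⟨K, hK, hgK⟩ := mem_cocompact.1 (hlim.norm.eventually_le_const (by rwa [norm_zero]))
    obtain ⟨R, hR, hKR⟩ := hK.isBounded.subset_closedBall_lt 0 0
    exact ⟨R, hR, fun y hy => hgK fun hyK => hy (hKR hyK)⟩
  let χ : ContDiffBump (0 : V) := ⟨R, R + 1, hR, lt_add_one R⟩
  refine ⟨fun y => χ y • g y, χ.contDiff.smul hg, χ.hasCompactSupport.smul_right, fun y => ?_⟩
  have hχ : g y - χ y • g y = (1 - χ y) • g y := by rw [sub_smul, one_smul]
  by_cases hy : y ∈ closedBall 0 R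
  · simp only [χ.one_of_mem_closedBall hy, one_smul, sub_self, norm_zero, hε.le]
  · calc ‖g y - χ y • g y‖ = (1 - χ y) * ‖g y‖ := by
          rw [hχ, norm_smul, Real.norm_of_nonneg (sub_nonneg.2 χ.le_one)]
      _ ≤ 1 * ε := mul_le_mul (sub_le_self _ χ.nonneg) (hgR y hy) (norm_nonneg _) zero_le_one
      _ = ε := one_mul ε

variable [MeasurableSpace V] [BorelSpace V] {μ : Measure V} [μ.IsAddHaarMeasure] [CompleteSpace F]
  {δ : ℝ} {f : V → F}

lemma exists_contDiff_hasCompactSupport_localBMOENorm_sub_lt (hδ : 0 < δ)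
    (hf : LocallyIntegrable f μ) (hosc : HasVanishingMeanOscillation μ f)
    (hdist : VanishesOnDistantBalls μ δ f) {ε : ℝ} (hε : 0 < ε) :
    ∃ φ : V → F, ContDiff ℝ (⊤ : ℕ∞) φ ∧ HasCompactSupport φ ∧
      localBMOENorm μ δ (f - φ) < ENNReal.ofReal ε := by
  set η := ε / (12 * 8 ^ finrank ℝ V)
  obtain ⟨σ, hσ, hfσ⟩ := hosc η (by positivity)
  obtain ⟨t, ht, htmin⟩ := exists_between (lt_min (half_pos hσ) hδ)
  obtain ⟨htσ, htδ⟩ := lt_min_iff.1 htmin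
  let ψ : ContDiffBump (0 : V) := ⟨t / 2, t, half_pos ht, half_lt_self ht⟩
  set g := mollification ψ μ f
  have hg : ContDiff ℝ (⊤ : ℕ∞) g := contDiff_mollification hf
  have hfg : localBMOENorm μ δ (f - g) ≤ ENNReal.ofReal (6 * (8 ^ finrank ℝ V * η)) :=
    localBMOENorm_sub_mollification_le hf (mul_div_cancel₀ t two_ne_zero).ge htδ.le
      fun x r hr hrt => (hfσ x r hr (by linarith [show r ≤ 2 * t from hrt])).le
  obtain ⟨φ, hφ, hφsupp, hgφ⟩ := exists_contDiff_hasCompactSupport_norm_sub_le hg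
    (tendsto_mollification_cocompact hf hdist htδ.le) (show 0 < ε / 12 by positivity)
  have hfg_int : LocallyIntegrable (f - g) μ := hf.sub hg.continuous.locallyIntegrable
  have hgφ_int : LocallyIntegrable (g - φ) μ := (hg.sub hφ).continuous.locallyIntegrable
  refine ⟨φ, hφ, hφsupp, ?_⟩
  calc localBMOENorm μ δ (f - φ) = localBMOENorm μ δ ((f - g) + (g - φ)) := by
        rw [sub_add_sub_cancel]
    _ ≤ ENNReal.ofReal (6 * (8 ^ finrank ℝ V * η)) + ENNReal.ofReal (2 * (ε / 12) + ε / 12) :=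
        (localBMOENorm_add_le hfg_int hgφ_int).trans
          (add_le_add hfg (localBMOENorm_le_of_norm_le hgφ_int (by positivity) hgφ))
    _ = ENNReal.ofReal (ε / 2 + ε / 4) := by
        rw [← ENNReal.ofReal_add (by positivity) (by positivity)]
        congr 1
        simp only [η]
        field_simp
        norm_num
    _ < ENNReal.ofReal ε := (ENNReal.ofReal_lt_ofReal_iff hε).2 (by linarith)

theorem stmt15_general (hδ : 0 < δ) (hf : LocallyIntegrable f μ) :
    (HasVanishingMeanOscillation μ f ∧ VanishesOnDistantBalls μ δ f) ↔
      ∀ ε > 0, ∃ φ : V → F, ContDiff ℝ (⊤ : ℕ∞) φ ∧ HasCompactSupport φ ∧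
        localBMOENorm μ δ (f - φ) < ENNReal.ofReal ε := by
  refine ⟨fun ⟨hosc, hdist⟩ ε hε =>
    exists_contDiff_hasCompactSupport_localBMOENorm_sub_lt hδ hf hosc hdist hε, fun h => ⟨?_, ?_⟩⟩
  · refine hasVanishingMeanOscillation_of_forall_exists_bmoESeminorm_sub_lt hf fun ε hε => ?_
    obtain ⟨φ, hφ, hsupp, hfφ⟩ := h ε hε
    exact ⟨φ, hφ.continuous.locallyIntegrable,
      hasVanishingMeanOscillation_of_uniformContinuous
        (hsupp.uniformContinuous_of_continuous hφ.continuous) hφ.continuous.locallyIntegrable,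
      bmoESeminorm_le_localBMOENorm.trans_lt hfφ⟩
  · refine vanishesOnDistantBalls_of_forall_exists_largeScaleMeanENorm_sub_lt hf fun ε hε => ?_
    obtain ⟨φ, hφ, hsupp, hfφ⟩ := h ε hε
    exact ⟨φ, hφ.continuous.locallyIntegrable, vanishesOnDistantBalls_of_hasCompactSupport hsupp,
      largeScaleMeanENorm_le_localBMOENorm.trans_lt hfφ⟩

end Approximation

/-! ### Euclidean space -/

lemma ballAvg_eq_setAverage (d : ℕ) (f : E d → ℝ) (x : E d) (r : ℝ) :
    ballAvg d f x r = ⨍ y in ball x r, f y :=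
  (setAverage_eq ..).symm

lemma oscB_eq_meanOscillation (d : ℕ) (f : E d → ℝ) (x : E d) (r : ℝ) :
    oscB d f x r = meanOscillation (volume.restrict (ball x r)) f := by
  simp only [oscB, ballAvg_eq_setAverage, meanOscillation, Real.norm_eq_abs]

lemma bmonNorm_eq_localBMOENorm (d : ℕ) (n : ℤ) (f : E d → ℝ) :
    bmonNorm d n f = localBMOENorm volume ((2 : ℝ) ^ (-(n : ℝ) / 2)) f := by
  simp only [bmonNorm, bmoNormE, localBMOENorm, bmoESeminorm, largeScaleMeanENorm,
    oscB_eq_meanOscillation, ballAvg_eq_setAverage, Real.norm_eq_abs]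

/-- A locally integrable `f` with `‖f‖_{bmo_n} < ∞` belongs to `vmo_n` if and only if
it can be approximated in the `bmo_n` norm by functions in `C_c^∞`. -/
theorem stmt15 (d : ℕ) (hd : 3 ≤ d) (n : ℤ) (f : E d → ℝ)
    (hf : LocallyIntegrable f volume) (hfin : bmonNorm d n f < ⊤) :
    ((∀ ε > 0, ∃ σ > 0, ∀ (x : E d) (r : ℝ), 0 < r → r < σ → oscB d f x r < ε) ∧
      (∀ ε > 0, ∃ R > 0, ∀ (x : E d) (r : ℝ), (2:ℝ) ^ (-(n:ℝ)/2) ≤ r →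
        ball x r ∩ ball (0 : E d) R = ∅ → ballAvg d (fun y => |f y|) x r < ε)) ↔
    (∀ ε > 0, ∃ φ : E d → ℝ, ContDiff ℝ (⊤ : ℕ∞) φ ∧ HasCompactSupport φ ∧
      bmonNorm d n (fun y => f y - φ y) < ENNReal.ofReal ε) := by
  simpa only [HasVanishingMeanOscillation, VanishesOnDistantBalls, Set.disjoint_iff_inter_eq_empty,
    Real.norm_eq_abs, Pi.sub_def, ← ballAvg_eq_setAverage, ← oscB_eq_meanOscillation,
    ← bmonNorm_eq_localBMOENorm] using
    stmt15_general (rpow_pos_of_pos two_pos (-(n : ℝ) / 2)) hf
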